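/- Let K ≥ 1, let w₁, …, w_K be strictly positive reals with w₁ + ⋯ + w_K = 1, let μ₁, …, μ_K ∈ ℝ, and let σ₀ > 0 and t > 0. Define p₀(x) = Σ_{i=1}^K w_i · N(x | μ_i, σ₀²), p_t(x) = Σ_{i=1}^K w_i · N(x | μ_i, σ₀² + t²), the posterior weights w̃_i(x) = w_i · N(x | μ_i, σ₀²) / Σ_{j=1}^K w_j · N(x | μ_j, σ₀²), and the function f_t(x) = −log p₀(x) − log( Σ_{i=1}^K w̃_i(x) · exp( (x − μ_i)² · t² / (2 σ₀² (σ₀² + t²)) ) ). Then for every x ∈ ℝ, −log p_t(x) = −(1/2) · log( σ₀² / (σ₀² + t²) ) + f_t(x); in particular, f_t and −log p_t differ by a constant independent of x. -/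

import Mathlib

/-!
Raising the variance of a Gaussian density from `v` to `v + s` multiplies it by the constant
`√(v / (v + s))` and by `exp ((x - μ)² s / (2 v (v + s)))` (`gaussPDF_add_var`). Summing over the
mixture components gives `p_t = √r · p₀ · ∑ i, w̃ᵢ exp(⋯)` with `r = σ₀² / (σ₀² + t²)`, where `p₀`
cancels the normalisation of the posterior weights. All three factors are positive, so taking
`-log` yields the identity.
-/

/-- One-dimensional Gaussian probability density `N(x | μ, v)` with mean `μ`
and variance `v`: `(1/√(2π v)) · exp(−(x − μ)²/(2 v))`. -/
noncomputable def gaussPDF (μ v x : ℝ) : ℝ :=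
  (1 / Real.sqrt (2 * Real.pi * v)) * Real.exp (-(x - μ) ^ 2 / (2 * v))

lemma gaussPDF_pos {v : ℝ} (hv : 0 < v) (μ x : ℝ) : 0 < gaussPDF μ v x := by
  unfold gaussPDF
  have := Real.pi_pos
  positivity

lemma gaussPDF_add_var {v s : ℝ} (hv : 0 < v) (hs : 0 < s) (μ x : ℝ) :
    gaussPDF μ (v + s) x = Real.sqrt (v / (v + s)) *
      (gaussPDF μ v x * Real.exp ((x - μ) ^ 2 * s / (2 * v * (v + s)))) := by
  have hvs : 0 < v + s := add_pos hv hs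
  have hpi := Real.pi_pos
  have hexp : -(x - μ) ^ 2 / (2 * (v + s)) =
      -(x - μ) ^ 2 / (2 * v) + (x - μ) ^ 2 * s / (2 * v * (v + s)) := by
    field_simp
    ring
  have hsqrt : 1 / Real.sqrt (2 * Real.pi * (v + s)) =
      Real.sqrt (v / (v + s)) * (1 / Real.sqrt (2 * Real.pi * v)) := by
    rw [Real.sqrt_div hv.le, Real.sqrt_mul (by positivity : 0 ≤ 2 * Real.pi) (v + s),
      Real.sqrt_mul (by positivity : 0 ≤ 2 * Real.pi) v]
    have h1 : 0 < Real.sqrt v := Real.sqrt_pos.2 hv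
    have h2 : 0 < Real.sqrt (v + s) := Real.sqrt_pos.2 hvs
    have h3 : 0 < Real.sqrt (2 * Real.pi) := Real.sqrt_pos.2 (by positivity)
    field_simp
  unfold gaussPDF
  rw [hexp, hsqrt, Real.exp_add]
  ring

/-- Case 2 of Theorem 1 (Procedure Equivalence): for a Gaussian mixture,
`−log p_t(x) = −(1/2)·log(σ₀²/(σ₀²+t²)) + f_t(x)`, so the continuation objective `f_t`
and `−log p_t` differ by a constant independent of `x`. -/
theorem neg_log_pt_eq_const_add_ft (K : ℕ) (hK : 1 ≤ K) (w : Fin K → ℝ)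
    (hw : ∀ i, 0 < w i) (hsum : ∑ i, w i = 1) (μ : Fin K → ℝ) (σ₀ t : ℝ)
    (hσ : 0 < σ₀) (ht : 0 < t) (x : ℝ) :
    let p₀ : ℝ → ℝ := fun y => ∑ i, w i * gaussPDF (μ i) (σ₀ ^ 2) y
    let pt : ℝ → ℝ := fun y => ∑ i, w i * gaussPDF (μ i) (σ₀ ^ 2 + t ^ 2) y
    let wtilde : Fin K → ℝ → ℝ := fun i y =>
      w i * gaussPDF (μ i) (σ₀ ^ 2) y / ∑ j, w j * gaussPDF (μ j) (σ₀ ^ 2) y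
    let f : ℝ → ℝ := fun y =>
      -Real.log (p₀ y) -
        Real.log (∑ i, wtilde i y *
          Real.exp ((y - μ i) ^ 2 * t ^ 2 / (2 * σ₀ ^ 2 * (σ₀ ^ 2 + t ^ 2))))
    (-Real.log (pt x) = -(1 / 2) * Real.log (σ₀ ^ 2 / (σ₀ ^ 2 + t ^ 2)) + f x) := by
  intro p₀ pt wtilde f
  have hv : 0 < σ₀ ^ 2 := by positivity
  have hs : 0 < t ^ 2 := by positivity
  have hne : (Finset.univ : Finset (Fin K)).Nonempty := ⟨⟨0, hK⟩, Finset.mem_univ _⟩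
  have hp₀ : 0 < p₀ x :=
    Finset.sum_pos (fun i _ => mul_pos (hw i) (gaussPDF_pos hv _ _)) hne
  set S : ℝ := ∑ i, wtilde i x *
    Real.exp ((x - μ i) ^ 2 * t ^ 2 / (2 * σ₀ ^ 2 * (σ₀ ^ 2 + t ^ 2))) with hS
  have hSpos : 0 < S :=
    Finset.sum_pos (fun i _ => mul_pos
      (div_pos (mul_pos (hw i) (gaussPDF_pos hv _ _)) hp₀) (Real.exp_pos _)) hne
  have hr : 0 < σ₀ ^ 2 / (σ₀ ^ 2 + t ^ 2) := by positivity
  have hfac : pt x = Real.sqrt (σ₀ ^ 2 / (σ₀ ^ 2 + t ^ 2)) * (p₀ x * S) := by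
    rw [hS, Finset.mul_sum, Finset.mul_sum]
    refine Finset.sum_congr rfl fun i _ => ?_
    have hcancel : p₀ x * wtilde i x = w i * gaussPDF (μ i) (σ₀ ^ 2) x :=
      mul_div_cancel₀ _ hp₀.ne'
    rw [← mul_assoc (p₀ x), hcancel, gaussPDF_add_var hv hs]
    ring
  have hf : f x = -Real.log (p₀ x) - Real.log S := rfl
  rw [hf, hfac, Real.log_mul (Real.sqrt_pos.2 hr).ne' (mul_pos hp₀ hSpos).ne',
    Real.log_mul hp₀.ne' hSpos.ne', Real.log_sqrt hr.le]
  ring
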